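/- For every integer l > 1: (i) if φ ∈ M₄(l)* satisfies φ∘i = −φ, then PD(φ) ∈ S₄(l)_+, and PD(φ) = 0 if and only if φ vanishes identically on S₄(l)_−; (ii) every element of S₄(l)_+ is of the form PD(φ) for some φ ∈ M₄(l)* with φ∘i = −φ. Hence PD induces an isomorphism from the dual space of S₄(l)_− onto S₄(l)_+. -/

import Mathlib

open scoped BigOperators

namespace MW

variable (l : ℕ)

/-- Index type for the basis symbols: `0 ↦ x²`, `1 ↦ xy`, `2 ↦ y²`. -/
abbrev Sym := Fin 3 × ZMod l × ZMod l

/-- The free ℂ-vector space on the symbols. -/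
abbrev V := Sym l →₀ ℂ

/-- `gcd(u,v,l) = 1`. -/
def copr (u v : ZMod l) : Prop := Nat.gcd (Nat.gcd (ZMod.val u) (ZMod.val v)) l = 1

instance (u v : ZMod l) : Decidable (copr l u v) := by unfold copr; infer_instance

noncomputable def X2 (u v : ZMod l) : V l := Finsupp.single (0, u, v) 1
noncomputable def XY (u v : ZMod l) : V l := Finsupp.single (1, u, v) 1
noncomputable def Y2 (u v : ZMod l) : V l := Finsupp.single (2, u, v) 1

/-- The relation subspace: the relations of Merel–Shokurov on coprime symbols,
together with the (dummy) basis vectors at non-coprime indices. -/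
noncomputable def Rel : Submodule ℂ (V l) :=
  Submodule.span ℂ
    ({ w | ∃ u v, ¬ copr l u v ∧ (w = X2 l u v ∨ w = XY l u v ∨ w = Y2 l u v) } ∪
     { w | ∃ u v, copr l u v ∧
        (w = X2 l u v + Y2 l v (-u) ∨
         w = XY l u v - XY l v (-u) ∨
         w = Y2 l u v + X2 l v (-u) ∨
         w = XY l v (-u - v) - XY l (-u - v) u + Y2 l (-u - v) u + X2 l u v - XY l u v) })

/-- The space of weight four modular symbols of level `l`. -/
abbrev M := V l ⧸ Rel l

noncomputable def x2 (u v : ZMod l) : M l := Submodule.Quotient.mk (X2 l u v)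
noncomputable def xy (u v : ZMod l) : M l := Submodule.Quotient.mk (XY l u v)
noncomputable def y2 (u v : ZMod l) : M l := Submodule.Quotient.mk (Y2 l u v)

/-- The class of `p₂·x²(u,v) + p₁·xy(u,v) + p₀·y²(u,v)` in `M l`. -/
noncomputable def pcl (p2 p1 p0 : ℂ) (u v : ZMod l) : M l :=
  p2 • x2 l u v + p1 • xy l u v + p0 • y2 l u v

/-- Reduction `ZMod l → ZMod (gcd(a,l))`. -/
noncomputable def castg (a : ZMod l) : ZMod l →+* ZMod (Nat.gcd (ZMod.val a) l) :=
  ZMod.castHom (Nat.gcd_dvd_right (ZMod.val a) l) (ZMod (Nat.gcd (ZMod.val a) l))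

/-- The functional on `V l` attached to the cusp data `(a, b)`. -/
noncomputable def psiV (a : ZMod l) (b : ZMod (Nat.gcd (ZMod.val a) l)) : V l →ₗ[ℂ] ℂ :=
  Finsupp.lift ℂ ℂ (Sym l) fun p =>
    if copr l p.2.1 p.2.2 then
      (if p.1 = 0 then
        ((if p.2.1 = a ∧ castg l a p.2.2 = b then (1 : ℂ) else 0) +
         (if p.2.1 = -a ∧ castg l a p.2.2 = -b then (1 : ℂ) else 0))
       else if p.1 = 2 then
        (-(if p.2.2 = a ∧ castg l a p.2.1 = -b then (1 : ℂ) else 0) -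
          (if p.2.2 = -a ∧ castg l a p.2.1 = b then (1 : ℂ) else 0))
       else 0)
    else 0

/-- The cuspidal subspace `S₄(l) ⊆ M₄(l)`: the (image in `M l` of the) intersection
of the kernels of all the functionals `ψ_{(a,b)}`. -/
noncomputable def S : Submodule ℂ (M l) :=
  Submodule.map (Rel l).mkQ
    (⨅ (a : ZMod l), ⨅ (b : ZMod (Nat.gcd (ZMod.val a) l)), ⨅ (_ : IsUnit b),
      LinearMap.ker (psiV l a b))

/-- The linear map on `V l` underlying the involution `i`:
`x²(u,v) ↦ x²(-u,v)`, `xy(u,v) ↦ -xy(-u,v)`, `y²(u,v) ↦ y²(-u,v)`. -/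
noncomputable def iV : V l →ₗ[ℂ] V l :=
  Finsupp.lift (V l) ℂ (Sym l) fun p =>
    if p.1 = 1 then -(Finsupp.single (1, -p.2.1, p.2.2) (1 : ℂ))
    else Finsupp.single (p.1, -p.2.1, p.2.2) (1 : ℂ)

/-- The Poincaré duality map (as a function on the dual space). -/
noncomputable def PD [NeZero l] (φ : Module.Dual ℂ (M l)) : M l :=
  (24 : ℂ)⁻¹ • ∑ u : ZMod l, ∑ v : ZMod l,
    ( φ (pcl l 1 (-2) 1 (-v) (u + v) - pcl l 1 2 1 v (v - u)) • x2 l u v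
      - (2 : ℂ) • φ (pcl l 0 (-1) 1 (-v) (u + v) + pcl l 0 1 1 v (v - u)) • xy l u v
      + φ (pcl l 0 0 1 (-v) (u + v) - pcl l 0 0 1 v (v - u)) • y2 l u v )

end MW

/-!
Let `GL₂(ℤ)` act on the free space of symbols through polynomials and indices at once. The
relations say that `σ` (of order four) acts by `-1` and that `1 + ρ + ρ²` kills everything (`ρ` of
order three), and the involution `i` is the action of `ε = diag(-1, 1)`. The discriminant of binary
quadratic forms gives a symmetric, equivariant identification of the free space with its dual.
It turns a functional `φ` on modular symbols into a vector `k` with `σk = -k` and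
`k + ρk + ρ²k = 0`, and then `PD(φ)` is the class of `(ρ⁻¹k - ρk)/24`.

In this form `PD` is visibly antisymmetric and anticommutes with `i`, so everything reduces to
showing that its range is exactly the cuspidal subspace: antisymmetry makes `PD(φ) = 0` equivalent
to `φ` vanishing on the range, and the two eigenspaces of `i` take care of the signs.

The functionals `ψ` are of the form `g ∘ σ - g`, where `g` is invariant under the stabiliser `±Tⁿ`
of a cusp, `T = σρ`; a short computation shows that `g ∘ σ - g` kills `ρ⁻¹k - ρk`. Conversely,
those indicator functions of cusps span all `T`-invariant functionals, so if every `ψ` kills `x`,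
then by duality `σx - x = Tz - z` has a solution `z`. Then `k = z - ρz = (1 - σ)(z - x)` satisfies
the equations above, and `ρ⁻¹k - ρk` represents `-6x`.
-/

namespace MW

open Matrix Matrix.GeneralLinearGroup
open scoped MatrixGroups

section LinearAlgebra

variable {K W : Type*} [Field K] [AddCommGroup W] [Module K W]

theorem apply_eq_zero_iff_of_antisymm {P : Module.Dual K W →ₗ[K] W}
    (hP : ∀ φ φ' : Module.Dual K W, φ' (P φ) = -φ (P φ')) (φ : Module.Dual K W) :
    P φ = 0 ↔ ∀ m ∈ LinearMap.range P, φ m = 0 := by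
  rw [← Module.forall_dual_apply_eq_zero_iff K]
  simp only [hP φ, neg_eq_zero, LinearMap.mem_range, forall_exists_index,
    forall_apply_eq_imp_iff]

theorem forall_apply_eq_zero_iff_of_comp_eq_neg [NeZero (2 : K)] {I : Module.End K W}
    (hI : Function.Involutive I) {N : Submodule K W} (hN : ∀ m ∈ N, I m ∈ N)
    {φ : Module.Dual K W} (hφ : φ ∘ₗ I = -φ) :
    (∀ m ∈ N, φ m = 0) ↔ ∀ m ∈ N, I m = -m → φ m = 0 := by
  refine ⟨fun h m hm _ => h m hm, fun h m hm => ?_⟩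
  have hanti : φ (m - I m) = 0 :=
    h _ (N.sub_mem hm (hN m hm)) (by rw [map_sub, hI m, neg_sub])
  have hIm : φ (I m) = -φ m := LinearMap.congr_fun hφ m
  rw [map_sub, hIm, sub_neg_eq_add, ← two_mul] at hanti
  exact (mul_eq_zero.1 hanti).resolve_left two_ne_zero

theorem exists_comp_eq_neg_of_apply_fixed [NeZero (2 : K)] {I : Module.End K W}
    (hI : Function.Involutive I) {P : Module.Dual K W →ₗ[K] W}
    (hPI : ∀ φ, P (φ ∘ₗ I) = -I (P φ)) {φ : Module.Dual K W} (hφ : I (P φ) = P φ) :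
    ∃ φ' : Module.Dual K W, φ' ∘ₗ I = -φ' ∧ P φ' = P φ := by
  refine ⟨(2 : K)⁻¹ • (φ - φ ∘ₗ I), ?_, ?_⟩
  · ext m
    simp only [LinearMap.comp_apply, LinearMap.smul_apply, LinearMap.sub_apply,
      LinearMap.neg_apply, hI m, smul_eq_mul]
    ring
  · rw [map_smul, map_sub, hPI, hφ, sub_neg_eq_add, ← two_smul K, smul_smul,
      inv_mul_cancel₀ two_ne_zero, one_smul]

end LinearAlgebra

section Symbols

variable {l : ℕ} {N : Type*} [AddCommGroup N] [Module ℂ N]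

/-- The symbol `P(u,v)` in the free space, for `P = q₂x² + q₁xy + q₀y²` and `p = (u,v)`. -/
noncomputable def quad (q₂ q₁ q₀ : ℂ) (p : ZMod l × ZMod l) : V l :=
  q₂ • X2 l p.1 p.2 + q₁ • XY l p.1 p.2 + q₀ • Y2 l p.1 p.2

theorem X2_eq_quad (u v : ZMod l) : X2 l u v = quad 1 0 0 (u, v) := by simp [quad]

theorem XY_eq_quad (u v : ZMod l) : XY l u v = quad 0 1 0 (u, v) := by simp [quad]

theorem Y2_eq_quad (u v : ZMod l) : Y2 l u v = quad 0 0 1 (u, v) := by simp [quad]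

theorem quad_zero (p : ZMod l × ZMod l) : quad 0 0 0 p = 0 := by simp [quad]

theorem map_quad (f : V l →ₗ[ℂ] N) (q₂ q₁ q₀ : ℂ) (p : ZMod l × ZMod l) :
    f (quad q₂ q₁ q₀ p) =
      q₂ • f (quad 1 0 0 p) + q₁ • f (quad 0 1 0 p) + q₀ • f (quad 0 0 1 p) := by
  simp [quad]

theorem hom_ext_quad {f g : V l →ₗ[ℂ] N}
    (h : ∀ q₂ q₁ q₀ p, f (quad q₂ q₁ q₀ p) = g (quad q₂ q₁ q₀ p)) : f = g := by
  refine Finsupp.lhom_ext' fun ⟨j, u, v⟩ => LinearMap.ext_ring ?_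
  fin_cases j
  · simpa [quad, X2] using h 1 0 0 (u, v)
  · simpa [quad, XY] using h 0 1 0 (u, v)
  · simpa [quad, Y2] using h 0 0 1 (u, v)

/-- The linear map on the free space with prescribed values on the symbols `x²p`, `xyp`, `y²p`. -/
noncomputable def symLift (a b c : ZMod l × ZMod l → N) : V l →ₗ[ℂ] N :=
  Finsupp.linearCombination ℂ fun s : Sym l => ![a s.2, b s.2, c s.2] s.1

theorem symLift_quad (a b c : ZMod l × ZMod l → N) (q₂ q₁ q₀ : ℂ) (p : ZMod l × ZMod l) :
    symLift a b c (quad q₂ q₁ q₀ p) = q₂ • a p + q₁ • b p + q₀ • c p := by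
  simp [symLift, quad, X2, XY, Y2]

theorem copr_iff_isCoprime [NeZero l] (u v : ZMod l) : copr l u v ↔ IsCoprime u v := by
  have hcopr : copr l u v ↔ IsUnit ((Nat.gcd u.val v.val : ℕ) : ZMod l) :=
    (ZMod.isUnit_iff_coprime _ _).symm
  have cast_dvd {m : ℕ} {w : ZMod l} (h : m ∣ w.val) : (m : ZMod l) ∣ w := by
    simpa using Nat.cast_dvd_cast (α := ZMod l) h
  rw [hcopr]
  constructor
  · rintro ⟨g, hg⟩
    have hbezout := congrArg (Int.cast : ℤ → ZMod l) (Nat.gcd_eq_gcd_ab u.val v.val)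
    push_cast [ZMod.natCast_zmod_val] at hbezout
    refine ⟨↑g⁻¹ * (Nat.gcdA u.val v.val : ZMod l), ↑g⁻¹ * (Nat.gcdB u.val v.val : ZMod l), ?_⟩
    linear_combination (-(↑g⁻¹ : ZMod l)) * hbezout - ↑g⁻¹ * hg + g.inv_mul
  · rintro ⟨a, b, h⟩
    refine isUnit_of_dvd_one (h ▸ dvd_add ?_ ?_)
    · exact (cast_dvd (Nat.gcd_dvd_left _ _)).mul_left a
    · exact (cast_dvd (Nat.gcd_dvd_right _ _)).mul_left b

end Symbols

section Action

variable {l : ℕ}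

/-- The action of `GL₂(ℤ)` on column vectors `(u,v)` modulo `l`. -/
def colPerm (l : ℕ) : GL (Fin 2) ℤ →* Equiv.Perm (ZMod l × ZMod l) :=
  MonoidHom.toHomPerm
    { toFun h p := ((h 0 0 : ZMod l) * p.1 + (h 0 1 : ZMod l) * p.2,
        (h 1 0 : ZMod l) * p.1 + (h 1 1 : ZMod l) * p.2)
      map_one' := funext fun p => by change _ = p; simp
      map_mul' g h := funext fun p => by
        refine Prod.ext ?_ ?_ <;> change _ = _ * (_ + _) + _ * (_ + _) <;>
          simp only [Units.val_mul, Matrix.mul_apply, Fin.sum_univ_two, Int.cast_add,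
            Int.cast_mul] <;> ring }

theorem colPerm_apply (h : GL (Fin 2) ℤ) (p : ZMod l × ZMod l) :
    colPerm l h p = ((h 0 0 : ZMod l) * p.1 + (h 0 1 : ZMod l) * p.2,
      (h 1 0 : ZMod l) * p.1 + (h 1 1 : ZMod l) * p.2) := rfl

/-- The linear map `P(u,v) ↦ (P ∘ h)(h(u,v))`, where `h` acts on the variables as the row vector
`(x,y)` and on the indices as a column vector. -/
noncomputable def actHom (l : ℕ) (h : GL (Fin 2) ℤ) : V l →ₗ[ℂ] V l :=
  symLift
    (fun p => quad ((h 0 0 : ℂ) ^ 2) (2 * h 0 0 * h 1 0) ((h 1 0 : ℂ) ^ 2) (colPerm l h p))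
    (fun p => quad (h 0 0 * h 0 1) (h 0 0 * h 1 1 + h 0 1 * h 1 0) (h 1 0 * h 1 1)
      (colPerm l h p))
    (fun p => quad ((h 0 1 : ℂ) ^ 2) (2 * h 0 1 * h 1 1) ((h 1 1 : ℂ) ^ 2) (colPerm l h p))

theorem actHom_quad (h : GL (Fin 2) ℤ) (q₂ q₁ q₀ : ℂ) (p : ZMod l × ZMod l) :
    actHom l h (quad q₂ q₁ q₀ p) =
      quad (q₂ * h 0 0 ^ 2 + q₁ * (h 0 0 * h 0 1) + q₀ * h 0 1 ^ 2)
        (q₂ * (2 * h 0 0 * h 1 0) + q₁ * (h 0 0 * h 1 1 + h 0 1 * h 1 0) +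
          q₀ * (2 * h 0 1 * h 1 1))
        (q₂ * h 1 0 ^ 2 + q₁ * (h 1 0 * h 1 1) + q₀ * h 1 1 ^ 2) (colPerm l h p) := by
  rw [actHom, symLift_quad]
  simp only [quad]
  module

/-- The representation of `GL₂(ℤ)` on the free space of symbols. -/
noncomputable def act (l : ℕ) : Representation ℂ (GL (Fin 2) ℤ) (V l) where
  toFun := actHom l
  map_one' := hom_ext_quad fun q₂ q₁ q₀ p => by simp [actHom_quad]
  map_mul' g h := hom_ext_quad fun q₂ q₁ q₀ p => by
    simp only [actHom_quad, map_mul, Equiv.Perm.mul_apply, Module.End.mul_apply,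
      Units.val_mul, Matrix.mul_apply, Fin.sum_univ_two, Int.cast_add, Int.cast_mul]
    congr 1 <;> ring

theorem act_quad (h : GL (Fin 2) ℤ) (q₂ q₁ q₀ : ℂ) (p : ZMod l × ZMod l) :
    act l h (quad q₂ q₁ q₀ p) =
      quad (q₂ * h 0 0 ^ 2 + q₁ * (h 0 0 * h 0 1) + q₀ * h 0 1 ^ 2)
        (q₂ * (2 * h 0 0 * h 1 0) + q₁ * (h 0 0 * h 1 1 + h 0 1 * h 1 0) +
          q₀ * (2 * h 0 1 * h 1 1))
        (q₂ * h 1 0 ^ 2 + q₁ * (h 1 0 * h 1 1) + q₀ * h 1 1 ^ 2) (colPerm l h p) :=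
  actHom_quad h q₂ q₁ q₀ p

theorem act_mul_apply (g h : GL (Fin 2) ℤ) (w : V l) : act l (g * h) w = act l g (act l h w) := by
  rw [map_mul, Module.End.mul_apply]

theorem act_neg_one_comm (h : GL (Fin 2) ℤ) (w : V l) :
    act l (-1) (act l h w) = act l h (act l (-1) w) := by
  rw [← act_mul_apply, ← act_mul_apply, neg_one_mul, mul_neg_one]

theorem act_neg_one_quad (q₂ q₁ q₀ : ℂ) (p : ZMod l × ZMod l) :
    act l (-1) (quad q₂ q₁ q₀ p) = quad q₂ q₁ q₀ (-p) := by
  have hp : (-p.1, -p.2) = -p := rfl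
  simp [act_quad, colPerm_apply, hp]

theorem isCoprime_of_isCoprime_colPerm (h : GL (Fin 2) ℤ) {p : ZMod l × ZMod l}
    (hp : IsCoprime (colPerm l h p).1 (colPerm l h p).2) : IsCoprime p.1 p.2 := by
  obtain ⟨a, b, hab⟩ := hp
  simp only [colPerm_apply] at hab
  exact ⟨a * (h 0 0 : ℤ) + b * (h 1 0 : ℤ), a * (h 0 1 : ℤ) + b * (h 1 1 : ℤ),
    by linear_combination hab⟩

theorem copr_colPerm_iff [NeZero l] (h : GL (Fin 2) ℤ) (p : ZMod l × ZMod l) :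
    copr l (colPerm l h p).1 (colPerm l h p).2 ↔ copr l p.1 p.2 := by
  simp only [copr_iff_isCoprime]
  refine ⟨isCoprime_of_isCoprime_colPerm h, fun hp => isCoprime_of_isCoprime_colPerm h⁻¹ ?_⟩
  simpa using hp

/-- The projection of the free space onto the span of the symbols with coprime indices. -/
noncomputable def coprProj (l : ℕ) : V l →ₗ[ℂ] V l :=
  symLift (fun p => if copr l p.1 p.2 then quad 1 0 0 p else 0)
    (fun p => if copr l p.1 p.2 then quad 0 1 0 p else 0)
    (fun p => if copr l p.1 p.2 then quad 0 0 1 p else 0)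

theorem coprProj_quad (q₂ q₁ q₀ : ℂ) (p : ZMod l × ZMod l) :
    coprProj l (quad q₂ q₁ q₀ p) = if copr l p.1 p.2 then quad q₂ q₁ q₀ p else 0 := by
  rw [coprProj, symLift_quad]
  split_ifs <;> simp [quad]

theorem coprProj_coprProj (w : V l) : coprProj l (coprProj l w) = coprProj l w := by
  suffices h : coprProj l ∘ₗ coprProj l = coprProj l from LinearMap.congr_fun h w
  refine hom_ext_quad fun q₂ q₁ q₀ p => ?_
  by_cases hp : copr l p.1 p.2 <;> simp [coprProj_quad, hp]

theorem coprProj_act [NeZero l] (h : GL (Fin 2) ℤ) (w : V l) :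
    coprProj l (act l h w) = act l h (coprProj l w) := by
  suffices h : coprProj l ∘ₗ act l h = act l h ∘ₗ coprProj l from LinearMap.congr_fun h w
  refine hom_ext_quad fun q₂ q₁ q₀ p => ?_
  by_cases hp : copr l p.1 p.2 <;> simp [act_quad, coprProj_quad, copr_colPerm_iff, hp]

/-- The projection of the free space onto the `-1`-invariant vectors supported on symbols with
coprime indices. -/
noncomputable def evenProj (l : ℕ) : V l →ₗ[ℂ] V l :=
  (2 : ℂ)⁻¹ • (coprProj l ∘ₗ (LinearMap.id + act l (-1)))

theorem evenProj_apply (w : V l) :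
    evenProj l w = (2 : ℂ)⁻¹ • (coprProj l w + coprProj l (act l (-1) w)) := by
  simp [evenProj]

theorem act_neg_one_act_neg_one (w : V l) : act l (-1) (act l (-1) w) = w := by
  rw [← act_mul_apply, neg_one_mul, neg_neg, map_one, Module.End.one_apply]

theorem evenProj_act [NeZero l] (h : GL (Fin 2) ℤ) (w : V l) :
    evenProj l (act l h w) = act l h (evenProj l w) := by
  simp only [evenProj_apply, act_neg_one_comm, coprProj_act, map_smul, map_add]

theorem act_neg_one_evenProj [NeZero l] (w : V l) : act l (-1) (evenProj l w) = evenProj l w := by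
  rw [← evenProj_act, evenProj_apply, evenProj_apply, act_neg_one_act_neg_one, add_comm]

theorem coprProj_evenProj (w : V l) : coprProj l (evenProj l w) = evenProj l w := by
  simp only [evenProj_apply, map_smul, map_add, coprProj_coprProj]

theorem evenProj_coprProj [NeZero l] (w : V l) : evenProj l (coprProj l w) = evenProj l w := by
  simp only [evenProj_apply, ← coprProj_act, coprProj_coprProj]

end Action

section Generators

/-- The element of order four of `SL₂(ℤ)` behind the two-term relations. -/
def sigma : GL (Fin 2) ℤ := ⟨!![0, -1; 1, 0], !![0, 1; -1, 0], by decide, by decide⟩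

/-- The element of order three of `SL₂(ℤ)` behind the three-term relation. -/
def rho : GL (Fin 2) ℤ := ⟨!![0, 1; -1, -1], !![-1, -1; 1, 0], by decide, by decide⟩

/-- The element of `GL₂(ℤ)` behind the involution `i`. -/
def epsilon : GL (Fin 2) ℤ := ⟨!![-1, 0; 0, 1], !![-1, 0; 0, 1], by decide, by decide⟩

theorem sigma_mul_sigma : sigma * sigma = -1 := by decide

theorem rho_mul_rho : rho * rho = rho⁻¹ := by decide

theorem sigma_mul_rho : sigma * rho = upperRightHom 1 := by decide

theorem epsilon_mul_epsilon : epsilon * epsilon = 1 := by decide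

variable {l : ℕ} (q₂ q₁ q₀ : ℂ) (u v : ZMod l)

theorem act_sigma_quad : act l sigma (quad q₂ q₁ q₀ (u, v)) = quad q₀ (-q₁) q₂ (-v, u) := by
  simp [act_quad, colPerm_apply, sigma]

theorem act_rho_quad : act l rho (quad q₂ q₁ q₀ (u, v)) =
    quad q₀ (-q₁ - 2 * q₀) (q₂ + q₁ + q₀) (v, -u - v) := by
  rw [act_quad, colPerm_apply]
  congr 1 <;> simp [rho] <;> ring

theorem act_neg_rho_quad : act l (-rho) (quad q₂ q₁ q₀ (u, v)) =
    quad q₀ (-q₁ - 2 * q₀) (q₂ + q₁ + q₀) (-v, u + v) := by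
  rw [← neg_one_mul, act_mul_apply, act_rho_quad, act_neg_one_quad]
  congr 1
  exact Prod.ext rfl (by simp [add_comm])

theorem act_rho_inv_quad : act l rho⁻¹ (quad q₂ q₁ q₀ (u, v)) =
    quad (q₂ + q₁ + q₀) (-2 * q₂ - q₁) q₂ (-u - v, u) := by
  rw [act_quad, colPerm_apply]
  congr 1 <;> simp [rho] <;> ring

theorem act_epsilon_quad : act l epsilon (quad q₂ q₁ q₀ (u, v)) = quad q₂ (-q₁) q₀ (-u, v) := by
  simp [act_quad, colPerm_apply, epsilon]

theorem act_epsilon_neg_rho_epsilon_quad :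
    act l (epsilon * -rho * epsilon) (quad q₂ q₁ q₀ (u, v)) =
      quad q₀ (-q₁ + 2 * q₀) (q₂ - q₁ + q₀) (v, v - u) := by
  rw [act_mul_apply, act_mul_apply, act_epsilon_quad, act_neg_rho_quad, act_epsilon_quad]
  congr 1 <;> ring_nf

theorem act_upperRightHom_quad (n : ℤ) : act l (upperRightHom n) (quad q₂ q₁ q₀ (u, v)) =
    quad (q₂ + n * q₁ + n ^ 2 * q₀) (q₁ + 2 * n * q₀) q₀ (u + (n : ZMod l) * v, v) := by
  rw [act_quad, colPerm_apply]
  congr 1 <;> simp [upperRightHom_apply] <;> ring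

theorem iV_eq_act : iV l = act l epsilon :=
  hom_ext_quad fun q₂ q₁ q₀ ⟨u, v⟩ => by
    rw [act_epsilon_quad, map_quad]
    simp [iV, quad, X2, XY, Y2]

end Generators

section Relations

variable {l : ℕ}

/-- The operator `1 + ρ + ρ²` of the three-term relation. -/
noncomputable def rhoSum (l : ℕ) : V l →ₗ[ℂ] V l := 1 + act l rho + act l rho⁻¹

theorem rhoSum_apply (w : V l) : rhoSum l w = w + act l rho w + act l rho⁻¹ w := rfl

theorem act_rho_act_rho (w : V l) : act l rho (act l rho w) = act l rho⁻¹ w := by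
  rw [← act_mul_apply, rho_mul_rho]

theorem rhoSum_act_rho (w : V l) : rhoSum l (act l rho w) = rhoSum l w := by
  rw [rhoSum_apply, rhoSum_apply, act_rho_act_rho, (act l).inv_self_apply]
  abel

theorem rhoSum_act_rho_inv (w : V l) : rhoSum l (act l rho⁻¹ w) = rhoSum l w := by
  rw [← act_rho_act_rho, rhoSum_act_rho, rhoSum_act_rho]

theorem rhoSum_quad (q₂ q₁ q₀ : ℂ) (u v : ZMod l) : rhoSum l (quad q₂ q₁ q₀ (u, v)) =
    quad q₂ q₁ q₀ (u, v) + quad q₀ (-q₁ - 2 * q₀) (q₂ + q₁ + q₀) (v, -u - v) +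
      quad (q₂ + q₁ + q₀) (-2 * q₂ - q₁) q₂ (-u - v, u) := by
  rw [rhoSum_apply, act_rho_quad, act_rho_inv_quad]

theorem mkQ_quad (q₂ q₁ q₀ : ℂ) (u v : ZMod l) :
    (Rel l).mkQ (quad q₂ q₁ q₀ (u, v)) = pcl l q₂ q₁ q₀ u v := rfl

theorem quad_mem_Rel_of_not_copr {u v : ZMod l} (h : ¬ copr l u v) (q₂ q₁ q₀ : ℂ) :
    quad q₂ q₁ q₀ (u, v) ∈ Rel l := by
  refine add_mem (add_mem ?_ ?_) ?_ <;> refine Submodule.smul_mem _ _ (Submodule.subset_span ?_)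
  · exact .inl ⟨u, v, h, .inl rfl⟩
  · exact .inl ⟨u, v, h, .inr (.inl rfl)⟩
  · exact .inl ⟨u, v, h, .inr (.inr rfl)⟩

theorem apply_mem_of_quad {T : V l →ₗ[ℂ] V l} {N : Submodule ℂ (V l)}
    (h : ∀ q₂ q₁ q₀ u v, T (quad q₂ q₁ q₀ (u, v)) ∈ N) (w : V l) : T w ∈ N := by
  have hT : N.mkQ ∘ₗ T = 0 := hom_ext_quad fun q₂ q₁ q₀ ⟨u, v⟩ =>
    (Submodule.Quotient.mk_eq_zero N).2 (h q₂ q₁ q₀ u v)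
  exact (Submodule.Quotient.mk_eq_zero N).1 (LinearMap.congr_fun hT w)

theorem sub_coprProj_mem_Rel (w : V l) : w - coprProj l w ∈ Rel l := by
  refine apply_mem_of_quad (T := 1 - coprProj l) (fun q₂ q₁ q₀ u v => ?_) w
  by_cases hp : copr l u v
  · simp [coprProj_quad, hp]
  · simpa [coprProj_quad, hp] using quad_mem_Rel_of_not_copr hp q₂ q₁ q₀

theorem mem_Rel_of_coprProj_mem {w : V l} (h : coprProj l w ∈ Rel l) : w ∈ Rel l := by
  simpa using add_mem (sub_coprProj_mem_Rel w) h

theorem quad_add_quad_mem_Rel {u v : ZMod l} (h : copr l (-v) u) (q₂ q₁ q₀ : ℂ) :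
    quad q₂ q₁ q₀ (u, v) + quad q₀ (-q₁) q₂ (-v, u) ∈ Rel l := by
  have hX : X2 l (-v) u + Y2 l u v ∈ Rel l :=
    Submodule.subset_span (.inr ⟨-v, u, h, .inl (by rw [neg_neg])⟩)
  have hXY : XY l (-v) u - XY l u v ∈ Rel l :=
    Submodule.subset_span (.inr ⟨-v, u, h, .inr (.inl (by rw [neg_neg]))⟩)
  have hY : Y2 l (-v) u + X2 l u v ∈ Rel l :=
    Submodule.subset_span (.inr ⟨-v, u, h, .inr (.inr (.inl (by rw [neg_neg])))⟩)
  have hsum := sub_mem (add_mem ((Rel l).smul_mem q₀ hX) ((Rel l).smul_mem q₂ hY))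
    ((Rel l).smul_mem q₁ hXY)
  convert hsum using 1
  simp only [quad]
  module

theorem add_act_sigma_mem_Rel [NeZero l] (w : V l) : w + act l sigma w ∈ Rel l := by
  refine apply_mem_of_quad (T := 1 + act l sigma) (fun q₂ q₁ q₀ u v => ?_) w
  rw [LinearMap.add_apply, Module.End.one_apply, act_sigma_quad]
  by_cases hp : copr l u v
  · have hσ : copr l (-v) u := by
      simpa [colPerm_apply, sigma, hp] using copr_colPerm_iff sigma (u, v)
    exact quad_add_quad_mem_Rel hσ q₂ q₁ q₀
  · refine mem_Rel_of_coprProj_mem ?_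
    rw [← act_sigma_quad, map_add, coprProj_act, coprProj_quad, if_neg hp, map_zero, add_zero]
    exact zero_mem _

theorem rhoSum_quad_sub_mem_Rel [NeZero l] (p : ZMod l × ZMod l) :
    rhoSum l (quad 1 (-1) 0 p) ∈ Rel l := by
  obtain ⟨u, v⟩ := p
  by_cases hp : copr l u v
  · refine Submodule.subset_span (.inr ⟨u, v, hp, .inr (.inr (.inr ?_))⟩)
    rw [rhoSum_quad]
    simp only [quad]
    module
  · refine mem_Rel_of_coprProj_mem ?_
    simp [rhoSum_apply, coprProj_act, coprProj_quad, hp]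

/- The relation for `x² - xy` spans the others under `ρ`, because `ρ⁻¹` sends `xy` to `x² - xy`. -/
theorem rhoSum_mem_Rel [NeZero l] (w : V l) : rhoSum l w ∈ Rel l := by
  have hXY (u v : ZMod l) : rhoSum l (quad 0 1 0 (u, v)) ∈ Rel l := by
    rw [← rhoSum_act_rho_inv, act_rho_inv_quad]
    simpa using rhoSum_quad_sub_mem_Rel (-u - v, u)
  have hX (u v : ZMod l) : rhoSum l (quad 1 0 0 (u, v)) ∈ Rel l := by
    have hsum : quad 1 0 0 (u, v) = quad 1 (-1) 0 (u, v) + quad 0 1 0 (u, v) := by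
      simp only [quad]
      module
    rw [hsum, map_add]
    exact add_mem (rhoSum_quad_sub_mem_Rel (u, v)) (hXY u v)
  have hY (u v : ZMod l) : rhoSum l (quad 0 0 1 (u, v)) ∈ Rel l := by
    have hρ : act l rho (quad 1 0 0 (-u - v, u)) = quad 0 0 1 (u, v) := by
      rw [act_rho_quad]; congr <;> ring
    rw [← hρ, rhoSum_act_rho]
    exact hX _ _
  refine apply_mem_of_quad (fun q₂ q₁ q₀ u v => ?_) w
  rw [map_quad]
  exact add_mem (add_mem ((Rel l).smul_mem _ (hX u v)) ((Rel l).smul_mem _ (hXY u v)))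
    ((Rel l).smul_mem _ (hY u v))

theorem mkQ_coprProj (w : V l) : (Rel l).mkQ (coprProj l w) = (Rel l).mkQ w :=
  ((Submodule.Quotient.eq _).2 (sub_coprProj_mem_Rel w)).symm

theorem mkQ_act_sigma [NeZero l] (w : V l) : (Rel l).mkQ (act l sigma w) = -(Rel l).mkQ w := by
  rw [eq_neg_iff_add_eq_zero, add_comm, ← map_add]
  exact (Submodule.Quotient.mk_eq_zero _).2 (add_act_sigma_mem_Rel w)

theorem mkQ_rhoSum [NeZero l] (w : V l) : (Rel l).mkQ (rhoSum l w) = 0 :=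
  (Submodule.Quotient.mk_eq_zero _).2 (rhoSum_mem_Rel w)

theorem mkQ_act_neg_one [NeZero l] (w : V l) : (Rel l).mkQ (act l (-1) w) = (Rel l).mkQ w := by
  rw [← sigma_mul_sigma, act_mul_apply, mkQ_act_sigma, mkQ_act_sigma, neg_neg]

theorem mkQ_evenProj [NeZero l] (w : V l) : (Rel l).mkQ (evenProj l w) = (Rel l).mkQ w := by
  rw [evenProj_apply, map_smul, map_add, mkQ_coprProj, mkQ_coprProj, mkQ_act_neg_one]
  module

theorem Rel_le_sup : Rel l ≤ LinearMap.range (1 + act l sigma) ⊔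
    LinearMap.range (rhoSum l) ⊔ LinearMap.range (1 - coprProj l) := by
  refine Submodule.span_le.2 ?_
  rintro w (⟨u, v, h, hw⟩ | ⟨u, v, -, hw⟩)
  · refine Submodule.mem_sup_right ⟨w, sub_eq_self.2 ?_⟩
    rcases hw with rfl | rfl | rfl
    · rw [X2_eq_quad, coprProj_quad, if_neg h]
    · rw [XY_eq_quad, coprProj_quad, if_neg h]
    · rw [Y2_eq_quad, coprProj_quad, if_neg h]
  · refine Submodule.mem_sup_left ?_
    rcases hw with rfl | rfl | rfl | rfl
    · refine Submodule.mem_sup_left ⟨quad 0 0 1 (v, -u), ?_⟩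
      simp [act_sigma_quad, X2_eq_quad, Y2_eq_quad, add_comm]
    · refine Submodule.mem_sup_left ⟨quad 0 (-1) 0 (v, -u), ?_⟩
      rw [LinearMap.add_apply, Module.End.one_apply, act_sigma_quad]
      simp [quad, sub_eq_neg_add]
    · refine Submodule.mem_sup_left ⟨quad 1 0 0 (v, -u), ?_⟩
      simp [act_sigma_quad, X2_eq_quad, Y2_eq_quad, add_comm]
    · refine Submodule.mem_sup_right ⟨quad 1 (-1) 0 (u, v), ?_⟩
      rw [rhoSum_quad]
      simp only [quad]
      module

theorem Rel_eq_sup [NeZero l] : Rel l = LinearMap.range (1 + act l sigma) ⊔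
    LinearMap.range (rhoSum l) ⊔ LinearMap.range (1 - coprProj l) := by
  refine le_antisymm Rel_le_sup (sup_le (sup_le ?_ ?_) ?_)
  · exact LinearMap.range_le_iff_comap.2 (Submodule.eq_top_iff'.2 add_act_sigma_mem_Rel)
  · exact LinearMap.range_le_iff_comap.2 (Submodule.eq_top_iff'.2 rhoSum_mem_Rel)
  · exact LinearMap.range_le_iff_comap.2 (Submodule.eq_top_iff'.2 sub_coprProj_mem_Rel)

theorem mem_range_dualMap_mkQ_Rel_iff [NeZero l] {f : Module.Dual ℂ (V l)} :
    f ∈ LinearMap.range (Rel l).mkQ.dualMap ↔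
      f + f ∘ₗ act l sigma = 0 ∧ f + f ∘ₗ act l rho + f ∘ₗ act l rho⁻¹ = 0 ∧
        f ∘ₗ coprProj l = f := by
  have mem_iff (T : Module.End ℂ (V l)) :
      f ∈ (LinearMap.range T).dualAnnihilator ↔ f ∘ₗ T = 0 := by
    rw [← LinearMap.ker_dualMap_eq_dualAnnihilator_range, LinearMap.mem_ker]; rfl
  rw [Submodule.range_dualMap_mkQ_eq, Rel_eq_sup, Submodule.dualAnnihilator_sup_eq,
    Submodule.dualAnnihilator_sup_eq, Submodule.mem_inf, Submodule.mem_inf, mem_iff, mem_iff,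
    mem_iff, and_assoc, rhoSum, LinearMap.comp_add, LinearMap.comp_add,
    LinearMap.comp_add, LinearMap.comp_sub, Module.End.one_eq_id, LinearMap.comp_id,
    sub_eq_zero, eq_comm (b := f ∘ₗ coprProj l)]

end Relations

section InvariantForm

variable {l : ℕ} [NeZero l]

/-- The isomorphism of the dual of the free space with the free space itself given by the
polarised discriminant `(q, r) ↦ q₂r₀ - q₁r₁/2 + q₀r₂` on each index `(u,v)`. -/
noncomputable def discDual (l : ℕ) [NeZero l] : Module.Dual ℂ (V l) →ₗ[ℂ] V l where
  toFun f := ∑ p, quad (f (quad 0 0 1 p)) (-2 * f (quad 0 1 0 p)) (f (quad 1 0 0 p)) p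
  map_add' f g := by
    rw [← Finset.sum_add_distrib]
    refine Finset.sum_congr rfl fun p _ => ?_
    simp only [quad, LinearMap.add_apply]
    module
  map_smul' t f := by
    rw [RingHom.id_apply, Finset.smul_sum]
    refine Finset.sum_congr rfl fun p _ => ?_
    simp only [quad, LinearMap.smul_apply, smul_eq_mul]
    module

theorem discDual_apply (f : Module.Dual ℂ (V l)) : discDual l f =
    ∑ p, quad (f (quad 0 0 1 p)) (-2 * f (quad 0 1 0 p)) (f (quad 1 0 0 p)) p := rfl

theorem apply_discDual_comm (f g : Module.Dual ℂ (V l)) :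
    f (discDual l g) = g (discDual l f) := by
  simp only [discDual_apply, map_sum]
  refine Finset.sum_congr rfl fun p _ => ?_
  rw [map_quad f (g _), map_quad g (f _)]
  simp only [smul_eq_mul]
  ring

theorem discDual_surjective : Function.Surjective (discDual l) := by
  refine LinearMap.range_eq_top.1 (Submodule.eq_top_iff'.2 fun w => ?_)
  refine apply_mem_of_quad (T := LinearMap.id) (fun q₂ q₁ q₀ u v => ?_) w
  refine ⟨symLift (Pi.single (u, v) q₀) (Pi.single (u, v) (-q₁ / 2)) (Pi.single (u, v) q₂), ?_⟩
  rw [discDual_apply, Finset.sum_eq_single (u, v)]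
  · simp [symLift_quad, mul_div_cancel₀]
  · intro p _ hp
    simp [symLift_quad, Pi.single_eq_of_ne hp, quad_zero]
  · simp

theorem discDual_injective : Function.Injective (discDual l) := by
  refine (injective_iff_map_eq_zero _).2 fun f hf => LinearMap.ext fun w => ?_
  obtain ⟨g, rfl⟩ := discDual_surjective w
  rw [apply_discDual_comm, hf, map_zero, LinearMap.zero_apply]

theorem det_sq_eq_one (h : GL (Fin 2) ℤ) : (h 0 0 * h 1 1 - h 0 1 * h 1 0) ^ 2 = 1 := by
  rw [← Matrix.det_fin_two]
  exact Int.isUnit_sq (Matrix.isUnits_det_units h)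

theorem act_discDual_comp_act (h : GL (Fin 2) ℤ) (f : Module.Dual ℂ (V l)) :
    act l h (discDual l (f ∘ₗ act l h)) = discDual l f := by
  have hdet : ((h 0 0 : ℂ) * h 1 1 - h 0 1 * h 1 0) ^ 2 = 1 := mod_cast det_sq_eq_one h
  rw [discDual_apply f, discDual_apply, map_sum,
    ← Equiv.sum_comp (colPerm l h) fun p => quad _ _ _ p]
  refine Finset.sum_congr rfl fun p _ => ?_
  simp only [LinearMap.comp_apply, act_quad]
  rw [map_quad f (_ + _), map_quad f (_ + _), map_quad f (_ + _)]
  simp only [smul_eq_mul]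
  congr 1
  · linear_combination f (quad 0 0 1 (colPerm l h p)) * hdet
  · linear_combination -2 * f (quad 0 1 0 (colPerm l h p)) * hdet
  · linear_combination f (quad 1 0 0 (colPerm l h p)) * hdet

theorem discDual_comp_act (h : GL (Fin 2) ℤ) (f : Module.Dual ℂ (V l)) :
    discDual l (f ∘ₗ act l h) = act l h⁻¹ (discDual l f) := by
  rw [← act_discDual_comp_act h f, (act l).inv_self_apply]

theorem discDual_comp_coprProj (f : Module.Dual ℂ (V l)) :
    discDual l (f ∘ₗ coprProj l) = coprProj l (discDual l f) := by
  rw [discDual_apply, discDual_apply, map_sum]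
  refine Finset.sum_congr rfl fun p _ => ?_
  by_cases hp : copr l p.1 p.2 <;> simp [coprProj_quad, hp, quad_zero]

theorem exists_discDual_eq_iff {k : V l} :
    (∃ φ : Module.Dual ℂ (M l), discDual l (φ ∘ₗ (Rel l).mkQ) = k) ↔
      act l sigma k = -k ∧ rhoSum l k = 0 ∧ coprProj l k = k := by
  obtain ⟨f, rfl⟩ := discDual_surjective k
  have hσ : f + f ∘ₗ act l sigma = 0 ↔ act l sigma (discDual l f) = -discDual l f := by
    rw [← discDual_injective.eq_iff, map_add, map_zero, discDual_comp_act,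
      ← ((act l).apply_bijective sigma).injective.eq_iff, map_add, map_zero,
      (act l).self_inv_apply, add_eq_zero_iff_eq_neg]
  have hρ : f + f ∘ₗ act l rho + f ∘ₗ act l rho⁻¹ = 0 ↔ rhoSum l (discDual l f) = 0 := by
    rw [← discDual_injective.eq_iff, map_add, map_add, map_zero, discDual_comp_act,
      discDual_comp_act, inv_inv, rhoSum_apply, add_right_comm]
  have hc : f ∘ₗ coprProj l = f ↔ coprProj l (discDual l f) = discDual l f := by
    rw [← discDual_injective.eq_iff, discDual_comp_coprProj]
  rw [← hσ, ← hρ, ← hc, ← mem_range_dualMap_mkQ_Rel_iff]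
  simp only [discDual_injective.eq_iff, LinearMap.mem_range, LinearMap.dualMap_apply']

end InvariantForm

section PoincareDuality

variable {l : ℕ}

theorem mapQ_iV_mkQ (hi : Rel l ≤ (Rel l).comap (iV l)) (w : V l) :
    (Rel l).mapQ (Rel l) (iV l) hi ((Rel l).mkQ w) = (Rel l).mkQ (act l epsilon w) := by
  rw [Submodule.mkQ_apply, Submodule.mapQ_apply, iV_eq_act, Submodule.mkQ_apply]

theorem mapQ_iV_involutive (hi : Rel l ≤ (Rel l).comap (iV l)) :
    Function.Involutive ((Rel l).mapQ (Rel l) (iV l) hi) := by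
  intro m
  obtain ⟨w, rfl⟩ := (Rel l).mkQ_surjective m
  rw [mapQ_iV_mkQ, mapQ_iV_mkQ, ← act_mul_apply, epsilon_mul_epsilon, map_one,
    Module.End.one_apply]

variable [NeZero l]

/-- The Poincaré duality map `PD` as a linear map, written with the action of `GL₂(ℤ)`. -/
noncomputable def poincare (l : ℕ) [NeZero l] : Module.Dual ℂ (M l) →ₗ[ℂ] M l :=
  (24 : ℂ)⁻¹ • ((Rel l).mkQ ∘ₗ discDual l ∘ₗ
    ((act l (-rho)).dualMap - (act l (epsilon * -rho * epsilon)).dualMap) ∘ₗ (Rel l).mkQ.dualMap)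

theorem poincare_apply (φ : Module.Dual ℂ (M l)) :
    poincare l φ = (24 : ℂ)⁻¹ • (Rel l).mkQ (discDual l ((φ ∘ₗ (Rel l).mkQ) ∘ₗ act l (-rho) -
      (φ ∘ₗ (Rel l).mkQ) ∘ₗ act l (epsilon * -rho * epsilon))) := rfl

theorem poincare_eq_PD (φ : Module.Dual ℂ (M l)) : poincare l φ = PD l φ := by
  rw [poincare_apply, PD, discDual_apply, map_sum, Fintype.sum_prod_type]
  congr 1
  refine Finset.sum_congr rfl fun u _ => Finset.sum_congr rfl fun v _ => ?_
  have hneg : pcl l 0 (-1) (-1) v (v - u) = -pcl l 0 1 1 v (v - u) := by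
    simp only [pcl]
    module
  simp only [LinearMap.sub_apply, LinearMap.comp_apply, act_neg_rho_quad,
    act_epsilon_neg_rho_epsilon_quad, mkQ_quad, neg_zero, mul_one, mul_zero, sub_zero, zero_add,
    zero_sub, add_zero, hneg, map_neg, map_sub, map_add]
  rw [pcl]
  module

theorem poincare_eq (φ : Module.Dual ℂ (M l)) :
    poincare l φ = (24 : ℂ)⁻¹ • ((Rel l).mkQ (act l rho⁻¹ (discDual l (φ ∘ₗ (Rel l).mkQ))) -
      (Rel l).mkQ (act l rho (discDual l (φ ∘ₗ (Rel l).mkQ)))) := by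
  obtain ⟨hσ, -, -⟩ := exists_discDual_eq_iff.1 ⟨φ, rfl⟩
  have hρ : (-rho)⁻¹ = -1 * rho⁻¹ := by decide
  have hconj : (epsilon * -rho * epsilon)⁻¹ = sigma * (rho * sigma) := by decide
  rw [poincare_apply, map_sub, map_sub, discDual_comp_act, discDual_comp_act, hρ, hconj,
    act_mul_apply, mkQ_act_neg_one, act_mul_apply, mkQ_act_sigma, act_mul_apply, hσ]
  simp

theorem poincare_antisymm (φ φ' : Module.Dual ℂ (M l)) :
    φ' (poincare l φ) = -φ (poincare l φ') := by
  have adjoint (h : GL (Fin 2) ℤ) (φ φ' : Module.Dual ℂ (M l)) :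
      φ' ((Rel l).mkQ (act l h (discDual l (φ ∘ₗ (Rel l).mkQ)))) =
        φ ((Rel l).mkQ (act l h⁻¹ (discDual l (φ' ∘ₗ (Rel l).mkQ)))) := by
    have hcomm := apply_discDual_comm ((φ' ∘ₗ (Rel l).mkQ) ∘ₗ act l h) (φ ∘ₗ (Rel l).mkQ)
    rwa [discDual_comp_act] at hcomm
  rw [poincare_eq, poincare_eq, map_smul, map_smul, map_sub, map_sub, adjoint rho,
    adjoint rho⁻¹, inv_inv, ← smul_neg, neg_sub]

theorem poincare_comp_mapQ (hi : Rel l ≤ (Rel l).comap (iV l)) (φ : Module.Dual ℂ (M l)) :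
    poincare l (φ ∘ₗ (Rel l).mapQ (Rel l) (iV l) hi) =
      -(Rel l).mapQ (Rel l) (iV l) hi (poincare l φ) := by
  have hpull : (φ ∘ₗ (Rel l).mapQ (Rel l) (iV l) hi) ∘ₗ (Rel l).mkQ =
      (φ ∘ₗ (Rel l).mkQ) ∘ₗ act l epsilon := by
    rw [LinearMap.comp_assoc, Submodule.mapQ_mkQ, iV_eq_act, LinearMap.comp_assoc]
  have hact (g h : GL (Fin 2) ℤ) (f : Module.Dual ℂ (V l)) :
      f ∘ₗ act l (g * h) = (f ∘ₗ act l g) ∘ₗ act l h := by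
    rw [LinearMap.comp_assoc, map_mul, Module.End.mul_eq_comp]
  have hleft : epsilon * -rho = epsilon * -rho * epsilon * epsilon := by decide
  have hright : epsilon * (epsilon * -rho * epsilon) = -rho * epsilon := by decide
  have hinv : epsilon⁻¹ = epsilon := by decide
  rw [poincare_apply, hpull, ← hact, ← hact, hright, hleft, hact (epsilon * -rho * epsilon),
    hact (-rho), map_sub, discDual_comp_act epsilon, discDual_comp_act epsilon, hinv,
    poincare_apply, map_smul, mapQ_iV_mkQ, ← map_sub, ← map_sub, ← neg_sub, map_neg, map_neg,
    map_neg, smul_neg]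

end PoincareDuality

section Cusps

variable {l : ℕ}

theorem copr_neg_left_comm {u v : ZMod l} [NeZero l] : copr l (-v) u ↔ copr l u v := by
  rw [copr_iff_isCoprime, copr_iff_isCoprime, IsCoprime.neg_left_iff, isCoprime_comm]

/-- The functional on the free space that detects the cusp `(a, b)` on the symbols `y²(u,v)`.
It is a primitive of `ψ_{(a,b)}`, in the sense of `psiV_eq`. -/
noncomputable def cuspIndicator (a : ZMod l) (b : ZMod (Nat.gcd (ZMod.val a) l)) :
    Module.Dual ℂ (V l) :=
  symLift 0 0 fun p => if copr l p.1 p.2 then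
    (if p.2 = a ∧ castg l a p.1 = -b then 1 else 0) +
      (if p.2 = -a ∧ castg l a p.1 = b then 1 else 0) else 0

theorem cuspIndicator_quad (a : ZMod l) (b : ZMod (Nat.gcd (ZMod.val a) l)) (q₂ q₁ q₀ : ℂ)
    (u v : ZMod l) : cuspIndicator a b (quad q₂ q₁ q₀ (u, v)) = q₀ * if copr l u v then
      (if v = a ∧ castg l a u = -b then 1 else 0) +
        (if v = -a ∧ castg l a u = b then 1 else 0) else 0 := by
  simp only [cuspIndicator, symLift_quad, Pi.zero_apply, smul_eq_mul, mul_zero, zero_add]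

/-- The functionals on the free space that come from functions on the cusps: they are invariant
under the stabiliser `±Tⁿ` of the cusp `∞` and vanish on the symbols with non-coprime indices. -/
structure IsCuspInvariant (g : Module.Dual ℂ (V l)) : Prop where
  apply_translate (w : V l) : g (act l (upperRightHom 1) w) = g w
  apply_neg (w : V l) : g (act l (-1) w) = g w
  apply_coprProj (w : V l) : g (coprProj l w) = g w

namespace IsCuspInvariant

variable {g : Module.Dual ℂ (V l)} (hg : IsCuspInvariant g)
include hg

theorem apply_sigma_rho (w : V l) : g (act l sigma (act l rho w)) = g w := by
  rw [← act_mul_apply, sigma_mul_rho, hg.apply_translate]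

theorem apply_sigma_rho_inv (w : V l) : g (act l sigma (act l rho⁻¹ w)) = g (act l rho w) := by
  rw [← act_rho_act_rho, hg.apply_sigma_rho]

theorem apply_rho_inv (w : V l) : g (act l rho⁻¹ w) = g (act l sigma w) := by
  rw [← hg.apply_sigma_rho (act l rho⁻¹ w), (act l).self_inv_apply]

theorem apply_sigma_sigma (w : V l) : g (act l sigma (act l sigma w)) = g w := by
  rw [← act_mul_apply, sigma_mul_sigma, hg.apply_neg]

theorem apply_sigma_sub_eq_zero {k : V l} (hσ : act l sigma k = -k) (hρ : rhoSum l k = 0) :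
    (g ∘ₗ act l sigma - g) (act l rho⁻¹ k - act l rho k) = 0 := by
  have hsum : g k + g (act l rho k) + g (act l rho⁻¹ k) = 0 := by
    rw [← map_add, ← map_add, ← rhoSum_apply, hρ, map_zero]
  rw [hg.apply_rho_inv, hσ, map_neg] at hsum
  simp only [LinearMap.sub_apply, LinearMap.comp_apply, map_sub, hg.apply_sigma_rho,
    hg.apply_sigma_rho_inv, hg.apply_rho_inv, hσ, map_neg]
  linear_combination 2 * hsum

theorem comp_sigma_sub_mem_range [NeZero l] :
    g ∘ₗ act l sigma - g ∈ LinearMap.range (Rel l).mkQ.dualMap := by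
  refine mem_range_dualMap_mkQ_Rel_iff.2 ⟨?_, ?_, ?_⟩ <;> refine LinearMap.ext fun w => ?_ <;>
    simp only [LinearMap.add_apply, LinearMap.sub_apply, LinearMap.comp_apply,
      LinearMap.zero_apply]
  · rw [hg.apply_sigma_sigma]
    ring
  · rw [hg.apply_sigma_rho, hg.apply_sigma_rho_inv, hg.apply_rho_inv]
    ring
  · rw [← coprProj_act, hg.apply_coprProj, hg.apply_coprProj]

end IsCuspInvariant

variable [NeZero l]

theorem castg_eq_zero_iff_dvd {a x : ZMod l} : castg l a x = 0 ↔ a ∣ x := by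
  have hval (x : ZMod l) : castg l a x = 0 ↔ a.val.gcd l ∣ x.val := by
    rw [← ZMod.natCast_eq_zero_iff, ← map_natCast (castg l a), ZMod.natCast_zmod_val]
  constructor
  · intro h
    have hgcd : ((a.val.gcd l : ℕ) : ZMod l) = a * (a.val.gcdA l : ZMod l) := by
      simpa using congrArg (Int.cast : ℤ → ZMod l) (Nat.gcd_eq_gcd_ab a.val l)
    have hx : ((a.val.gcd l : ℕ) : ZMod l) ∣ x := by
      simpa using Nat.cast_dvd_cast (α := ZMod l) ((hval x).1 h)
    exact (Dvd.intro _ hgcd.symm).trans hx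
  · rintro ⟨y, rfl⟩
    rw [map_mul, (hval a).2 (Nat.gcd_dvd_left _ _), zero_mul]

theorem psiV_eq (a : ZMod l) (b : ZMod (Nat.gcd (ZMod.val a) l)) :
    psiV l a b = cuspIndicator a b ∘ₗ act l sigma - cuspIndicator a b := by
  refine hom_ext_quad fun q₂ q₁ q₀ ⟨u, v⟩ => ?_
  rw [LinearMap.sub_apply, LinearMap.comp_apply, act_sigma_quad, cuspIndicator_quad,
    cuspIndicator_quad, map_quad]
  simp only [copr_neg_left_comm, map_neg, neg_eq_iff_eq_neg, neg_neg]
  by_cases h : copr l u v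
  · simp [psiV, quad, X2, XY, Y2, h]
    ring
  · simp [psiV, quad, X2, XY, Y2, h]

theorem isUnit_castg {a u v : ZMod l} (h : copr l u v) (hv : a ∣ v) : IsUnit (castg l a u) := by
  obtain ⟨r, s, hrs⟩ := (copr_iff_isCoprime u v).1 h
  have hmap := congrArg (castg l a) hrs
  rw [map_add, map_mul, map_mul, castg_eq_zero_iff_dvd.2 hv, mul_zero, add_zero, map_one] at hmap
  exact IsUnit.of_mul_eq_one_right _ hmap

theorem cuspIndicator_eq_zero_of_not_isUnit {a : ZMod l} {b : ZMod (Nat.gcd (ZMod.val a) l)}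
    (hb : ¬ IsUnit b) : cuspIndicator a b = 0 := by
  refine hom_ext_quad fun q₂ q₁ q₀ ⟨u, v⟩ => ?_
  rw [cuspIndicator_quad, LinearMap.zero_apply, mul_eq_zero, or_iff_not_imp_left]
  intro _
  refine ite_eq_right_iff.2 fun h => ?_
  rw [if_neg, if_neg, add_zero]
  · rintro ⟨rfl, rfl⟩
    exact hb (isUnit_castg h (dvd_neg.2 dvd_rfl))
  · rintro ⟨rfl, hu⟩
    exact hb (IsUnit.neg_iff b |>.1 (hu ▸ isUnit_castg h dvd_rfl))

theorem isCuspInvariant_cuspIndicator (a : ZMod l) (b : ZMod (Nat.gcd (ZMod.val a) l)) :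
    IsCuspInvariant (cuspIndicator a b) where
  apply_translate w := by
    suffices h : cuspIndicator a b ∘ₗ act l (upperRightHom 1) = cuspIndicator a b from
      LinearMap.congr_fun h w
    refine hom_ext_quad fun q₂ q₁ q₀ ⟨u, v⟩ => ?_
    have hcopr : copr l (u + v) v ↔ copr l u v := by
      simpa [colPerm_apply, upperRightHom_apply] using copr_colPerm_iff (upperRightHom 1) (u, v)
    have hcast : a ∣ v → castg l a (u + v) = castg l a u := fun h => by
      rw [map_add, castg_eq_zero_iff_dvd.2 h, add_zero]
    rw [LinearMap.comp_apply, act_upperRightHom_quad, cuspIndicator_quad, cuspIndicator_quad]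
    simp only [Int.cast_one, one_mul, hcopr]
    by_cases hv : a ∣ v
    · rw [hcast hv]
    · have hne : v ≠ a ∧ v ≠ -a := ⟨fun h => hv h.symm.dvd, fun h => hv (h ▸ dvd_neg.2 dvd_rfl)⟩
      simp only [hne.1, hne.2, false_and, if_false]
  apply_neg w := by
    suffices h : cuspIndicator a b ∘ₗ act l (-1) = cuspIndicator a b from LinearMap.congr_fun h w
    refine hom_ext_quad fun q₂ q₁ q₀ ⟨u, v⟩ => ?_
    rw [LinearMap.comp_apply, act_neg_one_quad, Prod.neg_mk, cuspIndicator_quad, cuspIndicator_quad]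
    have hcopr : copr l (-u) (-v) ↔ copr l u v := by
      simp only [copr_iff_isCoprime, IsCoprime.neg_neg_iff]
    simp only [hcopr, map_neg, neg_inj, neg_eq_iff_eq_neg (b := a), neg_eq_iff_eq_neg (b := b)]
    rw [add_comm]
  apply_coprProj w := by
    suffices h : cuspIndicator a b ∘ₗ coprProj l = cuspIndicator a b from LinearMap.congr_fun h w
    refine hom_ext_quad fun q₂ q₁ q₀ ⟨u, v⟩ => ?_
    by_cases h : copr l u v <;> simp [coprProj_quad, cuspIndicator_quad, h]

theorem mkQ_mem_S_iff {w : V l} : (Rel l).mkQ w ∈ S l ↔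
    ∀ a : ZMod l, ∀ b : ZMod (Nat.gcd (ZMod.val a) l), IsUnit b → psiV l a b w = 0 := by
  have mem_iff (w : V l) : (w ∈ ⨅ (a : ZMod l), ⨅ (b : ZMod (Nat.gcd (ZMod.val a) l)),
      ⨅ (_ : IsUnit b), LinearMap.ker (psiV l a b)) ↔
      ∀ a : ZMod l, ∀ b : ZMod (Nat.gcd (ZMod.val a) l), IsUnit b → psiV l a b w = 0 := by
    simp only [Submodule.mem_iInf, LinearMap.mem_ker]
  refine ⟨?_, fun h => ⟨w, (mem_iff w).2 h, rfl⟩⟩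
  rintro ⟨w', hw', hww'⟩ a b hb
  obtain ⟨ψ, hψ⟩ := (isCuspInvariant_cuspIndicator a b).comp_sigma_sub_mem_range
  rw [← psiV_eq] at hψ
  rw [← (mem_iff w').1 hw' a b hb, ← hψ, LinearMap.dualMap_apply, LinearMap.dualMap_apply, hww']

theorem poincare_mem_S (φ : Module.Dual ℂ (M l)) : poincare l φ ∈ S l := by
  obtain ⟨hσ, hρ, -⟩ := exists_discDual_eq_iff.1 ⟨φ, rfl⟩
  rw [poincare_eq, ← map_sub]
  refine (S l).smul_mem _ (mkQ_mem_S_iff.2 fun a b _ => ?_)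
  rw [psiV_eq, (isCuspInvariant_cuspIndicator a b).apply_sigma_sub_eq_zero hσ hρ]

end Cusps

section Classification

variable {l : ℕ}

instance instNeZeroGcdVal [NeZero l] (a : ZMod l) : NeZero (Nat.gcd (ZMod.val a) l) :=
  ⟨(Nat.gcd_pos_of_pos_right _ (NeZero.pos l)).ne'⟩

namespace IsCuspInvariant

variable {g : Module.Dual ℂ (V l)} (hg : IsCuspInvariant g)
include hg

theorem apply_upperRightHom (n : ℕ) (w : V l) : g (act l (upperRightHom (n : ℤ)) w) = g w := by
  induction n with
  | zero => simp
  | succ n ih =>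
    rw [Nat.cast_succ, add_comm, AddChar.map_add_eq_mul, act_mul_apply, hg.apply_translate, ih]

theorem apply_quad_neg (u v : ZMod l) : g (quad 0 0 1 (-u, -v)) = g (quad 0 0 1 (u, v)) := by
  rw [← hg.apply_neg, act_neg_one_quad, Prod.neg_mk, neg_neg, neg_neg]

variable [NeZero l]

theorem apply_quad (q₂ q₁ q₀ : ℂ) (u v : ZMod l) :
    g (quad q₂ q₁ q₀ (u, v)) = q₀ * g (quad 0 0 1 (u, v)) := by
  have hl : (l : ℂ) ≠ 0 := NeZero.ne _
  have htranslate (q₁ q₀ : ℂ) : q₁ * l * g (quad 1 0 0 (u, v)) + q₀ * l ^ 2 * g (quad 1 0 0 (u, v))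
      + 2 * l * q₀ * g (quad 0 1 0 (u, v)) = 0 := by
    have h := hg.apply_upperRightHom l (quad 0 q₁ q₀ (u, v))
    rw [act_upperRightHom_quad, map_quad, map_quad g 0 q₁] at h
    simp only [Int.cast_natCast, ZMod.natCast_self, zero_mul, add_zero, smul_eq_mul] at h
    linear_combination h
  have hX : g (quad 1 0 0 (u, v)) = 0 := by simpa [hl] using htranslate 1 0
  have hXY : g (quad 0 1 0 (u, v)) = 0 := by simpa [hl, hX] using htranslate 0 1
  rw [map_quad, hX, hXY, smul_zero, smul_zero, zero_add, zero_add, smul_eq_mul]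

theorem apply_quad_add_mul (u v n : ZMod l) :
    g (quad 0 0 1 (u + n * v, v)) = g (quad 0 0 1 (u, v)) := by
  have h := hg.apply_upperRightHom n.val (quad 0 0 1 (u, v))
  rw [act_upperRightHom_quad, hg.apply_quad] at h
  simpa using h

theorem apply_quad_congr {u u' v : ZMod l} (h : castg l v u = castg l v u') :
    g (quad 0 0 1 (u, v)) = g (quad 0 0 1 (u', v)) := by
  rw [← sub_eq_zero, ← map_sub, castg_eq_zero_iff_dvd] at h
  obtain ⟨n, hn⟩ := h
  rw [← hg.apply_quad_add_mul u' v n, mul_comm, ← hn, add_sub_cancel]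

theorem exists_two_smul_eq_sum_cuspIndicator :
    ∃ c : ∀ a : ZMod l, ZMod (Nat.gcd (ZMod.val a) l) → ℂ,
      (2 : ℂ) • g = ∑ a, ∑ b, c a b • cuspIndicator a b := by
  let lift (a : ZMod l) : ZMod (Nat.gcd (ZMod.val a) l) → ZMod l :=
    Function.surjInv (ZMod.ringHom_surjective (castg l a))
  have castg_lift (a : ZMod l) (b) : castg l a (lift a b) = b :=
    Function.surjInv_eq (ZMod.ringHom_surjective (castg l a)) b
  refine ⟨fun a b => g (quad 0 0 1 (lift a (-b), a)), hom_ext_quad fun q₂ q₁ q₀ ⟨u, v⟩ => ?_⟩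
  have sum_eq (u v : ZMod l) : ∑ a, ∑ b, g (quad 0 0 1 (lift a (-b), a)) *
      (if v = a ∧ castg l a u = -b then 1 else 0) = g (quad 0 0 1 (u, v)) := by
    rw [Fintype.sum_eq_single v fun a ha => by simp [ha.symm],
      Fintype.sum_eq_single (-castg l v u) fun b hb => by
        rw [if_neg fun h => hb (by rw [h.2, neg_neg]), mul_zero]]
    simpa using hg.apply_quad_congr (castg_lift v _)
  have hneg (a : ZMod l) (b : ZMod (Nat.gcd (ZMod.val a) l)) :
      v = -a ∧ castg l a u = b ↔ -v = a ∧ castg l a (-u) = -b := by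
    rw [map_neg, neg_inj, neg_eq_iff_eq_neg]
  have hcopr : ¬ copr l u v → g (quad q₂ q₁ q₀ (u, v)) = 0 := fun h => by
    rw [← hg.apply_coprProj, coprProj_quad, if_neg h, map_zero]
  simp only [LinearMap.smul_apply, LinearMap.sum_apply, cuspIndicator_quad, smul_eq_mul]
  by_cases h : copr l u v
  · simp only [if_pos h, hneg, mul_add, mul_left_comm _ q₀, Finset.sum_add_distrib,
      ← Finset.mul_sum, sum_eq, hg.apply_quad_neg]
    rw [hg.apply_quad]
    ring
  · simp [hcopr h, h]

theorem apply_sigma_of_psiV_eq_zero {w : V l}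
    (hw : ∀ a : ZMod l, ∀ b : ZMod (Nat.gcd (ZMod.val a) l), IsUnit b → psiV l a b w = 0) :
    g (act l sigma w) = g w := by
  have hcusp (a : ZMod l) (b : ZMod (Nat.gcd (ZMod.val a) l)) :
      cuspIndicator a b (act l sigma w) = cuspIndicator a b w := by
    by_cases hb : IsUnit b
    · simpa [psiV_eq, sub_eq_zero] using hw a b hb
    · simp [cuspIndicator_eq_zero_of_not_isUnit hb]
  obtain ⟨c, hc⟩ := hg.exists_two_smul_eq_sum_cuspIndicator
  have htwo (w : V l) : 2 * g w = ∑ a, ∑ b, c a b * cuspIndicator a b w := by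
    simpa using LinearMap.congr_fun hc w
  refine mul_left_cancel₀ (two_ne_zero (α := ℂ)) ?_
  simp only [htwo, hcusp]

end IsCuspInvariant

end Classification

section Surjectivity

variable {l : ℕ} [NeZero l]

theorem isCuspInvariant_comp_evenProj {f : Module.Dual ℂ (V l)}
    (hf : ∀ w, f (act l (upperRightHom 1) (evenProj l w)) = f (evenProj l w)) :
    IsCuspInvariant (f ∘ₗ evenProj l) where
  apply_translate w := by simp only [LinearMap.comp_apply, evenProj_act, hf]
  apply_neg w := by simp only [LinearMap.comp_apply, evenProj_act, act_neg_one_evenProj]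
  apply_coprProj w := by simp only [LinearMap.comp_apply, evenProj_coprProj]

theorem exists_act_upperRightHom_sub_eq {w : V l}
    (hw : ∀ a : ZMod l, ∀ b : ZMod (Nat.gcd (ZMod.val a) l), IsUnit b → psiV l a b w = 0) :
    ∃ z, act l (upperRightHom 1) (evenProj l z) - evenProj l z =
      act l sigma (evenProj l w) - evenProj l w := by
  let D : Module.End ℂ (V l) := (act l (upperRightHom 1) - 1) ∘ₗ evenProj l
  suffices h : act l sigma (evenProj l w) - evenProj l w ∈ LinearMap.range D from h
  by_contra h
  obtain ⟨f, hf, hD⟩ := Submodule.exists_le_ker_of_notMem h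
  refine hf ?_
  have hcusp : IsCuspInvariant (f ∘ₗ evenProj l) := isCuspInvariant_comp_evenProj fun w => by
    rw [← sub_eq_zero, ← map_sub]
    exact hD ⟨w, rfl⟩
  rw [map_sub, sub_eq_zero, ← evenProj_act]
  exact hcusp.apply_sigma_of_psiV_eq_zero hw

theorem act_sigma_act_sigma_evenProj (w : V l) :
    act l sigma (act l sigma (evenProj l w)) = evenProj l w := by
  rw [← act_mul_apply, sigma_mul_sigma, act_neg_one_evenProj]

theorem exists_act_rho_eq {w : V l}
    (hw : ∀ a : ZMod l, ∀ b : ZMod (Nat.gcd (ZMod.val a) l), IsUnit b → psiV l a b w = 0) :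
    ∃ z, act l rho (evenProj l z) =
      act l sigma (evenProj l z) + evenProj l w - act l sigma (evenProj l w) := by
  obtain ⟨z, hz⟩ := exists_act_upperRightHom_sub_eq hw
  refine ⟨z, ?_⟩
  rw [← sigma_mul_rho, act_mul_apply] at hz
  have hσ := congrArg (act l sigma) hz
  rw [map_sub, map_sub, act_sigma_act_sigma_evenProj, ← evenProj_act,
    act_sigma_act_sigma_evenProj, evenProj_act] at hσ
  rw [eq_add_of_sub_eq hσ]
  abel

theorem mkQ_act_rho_inv_sub_act_rho (y : V l) :
    (Rel l).mkQ (act l rho⁻¹ (y - act l rho y)) - (Rel l).mkQ (act l rho (y - act l rho y)) =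
      -3 • ((Rel l).mkQ y + (Rel l).mkQ (act l rho y)) := by
  have hsum := mkQ_rhoSum y
  rw [rhoSum_apply, map_add, map_add, add_comm, add_eq_zero_iff_eq_neg] at hsum
  simp only [map_sub, (act l).inv_self_apply, act_rho_act_rho, hsum]
  module

theorem S_le_range_poincare : S l ≤ LinearMap.range (poincare l) := by
  intro m hm
  obtain ⟨w, rfl⟩ := (Rel l).mkQ_surjective m
  obtain ⟨z, hz⟩ := exists_act_rho_eq (mkQ_mem_S_iff.1 hm)
  have hk : ∃ φ : Module.Dual ℂ (M l), discDual l (φ ∘ₗ (Rel l).mkQ) =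
      evenProj l z - act l rho (evenProj l z) := by
    refine exists_discDual_eq_iff.2 ⟨?_, ?_, ?_⟩
    · rw [hz]
      simp only [map_sub, map_add, act_sigma_act_sigma_evenProj]
      abel
    · rw [map_sub, rhoSum_act_rho, sub_self]
    · rw [map_sub, coprProj_act, coprProj_evenProj]
  obtain ⟨φ, hφ⟩ := hk
  refine ⟨(-4 : ℂ) • φ, ?_⟩
  rw [map_smul, poincare_eq, hφ, mkQ_act_rho_inv_sub_act_rho, hz, map_sub, map_add, mkQ_act_sigma,
    mkQ_act_sigma, mkQ_evenProj, mkQ_evenProj]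
  module

theorem range_poincare : LinearMap.range (poincare l) = S l :=
  le_antisymm (LinearMap.range_le_iff_comap.2 (Submodule.eq_top_iff'.2 poincare_mem_S))
    S_le_range_poincare

theorem mapQ_iV_mem_S (hi : Rel l ≤ (Rel l).comap (iV l)) {m : M l} (hm : m ∈ S l) :
    (Rel l).mapQ (Rel l) (iV l) hi m ∈ S l := by
  rw [← range_poincare] at hm ⊢
  obtain ⟨φ, rfl⟩ := hm
  exact ⟨-(φ ∘ₗ (Rel l).mapQ (Rel l) (iV l) hi), by
    rw [map_neg, poincare_comp_mapQ, neg_neg]⟩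

end Surjectivity

end MW

open MW in
theorem stmt10 (l : ℕ) (hl : 1 < l) [NeZero l]
    (hi : Rel l ≤ (Rel l).comap (iV l)) :
    (∀ φ : Module.Dual ℂ (M l), φ.comp (Submodule.mapQ (Rel l) (Rel l) (iV l) hi) = -φ →
      (PD l φ ∈ S l ∧ Submodule.mapQ (Rel l) (Rel l) (iV l) hi (PD l φ) = PD l φ) ∧
      (PD l φ = 0 ↔
        ∀ m ∈ S l, Submodule.mapQ (Rel l) (Rel l) (iV l) hi m = -m → φ m = 0)) ∧
    (∀ m ∈ S l, Submodule.mapQ (Rel l) (Rel l) (iV l) hi m = m →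
      ∃ φ : Module.Dual ℂ (M l),
        φ.comp (Submodule.mapQ (Rel l) (Rel l) (iV l) hi) = -φ ∧ PD l φ = m) := by
  set I : Module.End ℂ (M l) := (Rel l).mapQ (Rel l) (iV l) hi
  have hI : Function.Involutive I := mapQ_iV_involutive hi
  have hPI (φ : Module.Dual ℂ (M l)) : poincare l (φ ∘ₗ I) = -I (poincare l φ) :=
    poincare_comp_mapQ hi φ
  simp only [← poincare_eq_PD]
  refine ⟨fun φ hφ => ⟨⟨poincare_mem_S φ, ?_⟩, ?_⟩, fun m hm hIm => ?_⟩
  · rw [← neg_inj, ← hPI, hφ, map_neg]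
  · rw [apply_eq_zero_iff_of_antisymm poincare_antisymm, range_poincare,
      forall_apply_eq_zero_iff_of_comp_eq_neg hI (fun _ => mapQ_iV_mem_S hi) hφ]
  · obtain ⟨φ, rfl⟩ := S_le_range_poincare hm
    exact exists_comp_eq_neg_of_apply_fixed hI hPI hIm
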